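/- arXiv:0905.2557 — 2 statements merged into one kernel-verified Lean document; each statement's English description precedes it below -/
import Mathlib

section
/- Let λ be a partition of length l (λ_1 ≥ … ≥ λ_l > 0), let λ′ be its conjugate, and let r = #{i : λ_i ≥ i} be the number of diagonal boxes. Then the two sets {k − λ_k − 1 : k = r+1, …, l} and {λ′_j − j : j = 1, …, r} are disjoint and their union equals {0, 1, 2, …, l − 1}. -/
theorem dhc_aux (l : ℕ) (P : ℕ → Prop) [DecidablePred P]
    (h : ∀ i j : ℕ, 1 ≤ i → i ≤ j → j ≤ l → P j → P i) (i : ℕ) (h1 : 1 ≤ i) (hl : i ≤ l) :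
    P i ↔ i ≤ ((Finset.Icc 1 l).filter P).card := by
  constructor
  · intro hi
    have : Finset.Icc 1 i ⊆ (Finset.Icc 1 l).filter P := by
      intro a ha
      simp only [Finset.mem_Icc, Finset.mem_filter] at ha ⊢
      exact ⟨⟨ha.1, ha.2.trans hl⟩, h a i ha.1 ha.2 hl hi⟩
    simpa using Finset.card_le_card this
  · intro hc
    by_contra hn
    have : (Finset.Icc 1 l).filter P ⊆ Finset.Icc 1 (i - 1) := by
      intro a ha
      simp only [Finset.mem_Icc, Finset.mem_filter] at ha ⊢
      refine ⟨ha.1.1, ?_⟩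
      by_contra hh
      exact hn (h i a h1 (by omega) ha.1.2 ha.2)
    have := Finset.card_le_card this
    simp only [Nat.card_Icc] at this
    omega


/-- For a partition `λ_1 ≥ … ≥ λ_l > 0` (1-indexed via `lam`), with conjugate
`λ'_j = #{i : λ_i ≥ j}` and `r = #{i : λ_i ≥ i}` diagonal boxes, the sets
`{k - λ_k - 1 : r+1 ≤ k ≤ l}` and `{λ'_j - j : 1 ≤ j ≤ r}` are disjoint with union
`{0, 1, …, l-1}`. -/
theorem diag_hook_complement (l : ℕ) (lam : ℕ → ℕ)
    (hanti : ∀ i j : ℕ, 1 ≤ i → i ≤ j → j ≤ l → lam j ≤ lam i)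
    (hpos : ∀ i : ℕ, 1 ≤ i → i ≤ l → 0 < lam i) :
    let conj : ℕ → ℕ := fun j => ((Finset.Icc 1 l).filter fun i => j ≤ lam i).card
    let r : ℕ := ((Finset.Icc 1 l).filter fun i => i ≤ lam i).card
    let A : Finset ℤ := (Finset.Icc (r + 1) l).image fun k : ℕ => (k : ℤ) - (lam k : ℤ) - 1
    let B : Finset ℤ := (Finset.Icc 1 r).image fun j : ℕ => (conj j : ℤ) - (j : ℤ)
    Disjoint A B ∧ A ∪ B = Finset.Icc (0 : ℤ) ((l : ℤ) - 1) := by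
  intro conj r A B
  have hr : ∀ i, 1 ≤ i → i ≤ l → (i ≤ lam i ↔ i ≤ r) := fun i h1 h2 =>
    dhc_aux l (fun i => i ≤ lam i)
      (fun a b ha hab hb h => hab.trans (h.trans (hanti a b ha hab hb))) i h1 h2
  have hc : ∀ j i, 1 ≤ i → i ≤ l → (j ≤ lam i ↔ i ≤ conj j) := fun j i h1 h2 =>
    dhc_aux l (fun i => j ≤ lam i)
      (fun a b ha hab hb h => h.trans (hanti a b ha hab hb)) i h1 h2
  have hrl : r ≤ l := by
    simpa using Finset.card_filter_le (Finset.Icc 1 l) (fun i => i ≤ lam i)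
  have hcl : ∀ j, conj j ≤ l := fun j => by
    simpa using Finset.card_filter_le (Finset.Icc 1 l) (fun i => j ≤ lam i)
  have hcm : ∀ i j, i ≤ j → conj j ≤ conj i := fun i j hij =>
    Finset.card_le_card (Finset.monotone_filter_right _ (fun a _ h => hij.trans h))
  clear_value conj r
  have hd : Disjoint A B := by
    rw [Finset.disjoint_left]
    intro x hA hB
    simp only [A, B, Finset.mem_image, Finset.mem_Icc] at hA hB
    obtain ⟨k, hk, rfl⟩ := hA
    obtain ⟨j, hj, e⟩ := hB
    have := hc j k (by omega) hk.2
    omega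
  refine ⟨hd, Finset.eq_of_subset_of_card_le ?_ ?_⟩
  · intro x hx
    simp only [A, B, Finset.mem_union, Finset.mem_image, Finset.mem_Icc] at hx ⊢
    rcases hx with ⟨k, hk, rfl⟩ | ⟨j, hj, rfl⟩
    · have := hr k (by omega) hk.2
      omega
    · have := hr j hj.1 (by omega)
      have := hc j j hj.1 (by omega)
      have := hcl j
      omega
  · have cA : A.card = l - r := by
      rw [Finset.card_image_of_injOn]
      · simp
      · intro a ha b hb e
        simp only [Finset.coe_Icc, Set.mem_Icc] at ha hb e
        rcases le_total a b with h | h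
        · have := hanti a b (by omega) h hb.2
          omega
        · have := hanti b a (by omega) h ha.2
          omega
    have cB : B.card = r := by
      rw [Finset.card_image_of_injOn]
      · simp
      · intro a ha b hb e
        simp only at e
        rcases le_total a b with h | h
        · have := hcm a b h
          omega
        · have := hcm b a h
          omega
    rw [Finset.card_union_of_disjoint hd, cA, cB, Int.card_Icc]
    omega
end

section
/- Let R be a commutative ring, h : ℤ → R any sequence, and define h^{(0)}_i = h_i and h^{(r+1)}_i = h^{(r)}_{i+1} + h^{(r)}_{i−1} for r ≥ 0, i ∈ ℤ. Then for any l ≥ 1 and any integers m_1, …, m_l: det( h^{(j−1)}_{m_i} )_{1 ≤ i,j ≤ l} = det M, where M is the l×l matrix with M_{i,1} = h_{m_i} and M_{i,j} = h_{m_i + j − 1} + h_{m_i + 1 − j} for 2 ≤ j ≤ l. (Applied with m_i = λ_i − i + 1, this rewrites the generalized Jacobi–Trudy determinant in the Fulton–Harris form used for characters of the orthogonal and symplectic Lie algebras.) -/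
/-- `h^{(0)}_i = h_i`, `h^{(r+1)}_i = h^{(r)}_{i+1} + h^{(r)}_{i-1}`
(the specialization of the general recurrence to `a ≡ 0`, `b ≡ 1`). -/
def iterh {R : Type*} [CommRing R] (h : ℤ → R) : ℕ → ℤ → R
  | 0, i => h i
  | (r+1), i => iterh h r (i + 1) + iterh h r (i - 1)

def fhF {R : Type*} [CommRing R] (h : ℤ → R) (k : ℕ) (x : ℤ) : R :=
  if k = 0 then h x else h (x + k) + h (x - k)

def fhC (R : Type*) [CommRing R] : ℕ → ℕ → R
  | 0, 0 => 1
  | 0, _ + 1 => 0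
  | r + 1, 0 => 2 * fhC R r 1
  | r + 1, k + 1 => fhC R r k + fhC R r (k + 2)

theorem fhC_zero (R : Type*) [CommRing R] (r : ℕ) : ∀ k, r < k → fhC R r k = 0 := by
  induction r with
  | zero => intro k hk; obtain ⟨k, rfl⟩ : ∃ j, k = j + 1 := ⟨k - 1, by omega⟩; rfl
  | succ r ih =>
    intro k hk
    obtain ⟨k, rfl⟩ : ∃ j, k = j + 1 := ⟨k - 1, by omega⟩
    rw [fhC, ih k (by omega), ih (k + 2) (by omega), add_zero]

theorem fhC_diag (R : Type*) [CommRing R] (r : ℕ) : fhC R r r = 1 := by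
  induction r with
  | zero => rfl
  | succ r ih => rw [fhC, ih, fhC_zero R r (r + 2) (by omega), add_zero]

theorem fhF_step {R : Type*} [CommRing R] (h : ℤ → R) (k : ℕ) (x : ℤ) :
    fhF h (k + 2) (x + 1) + fhF h (k + 2) (x - 1) = fhF h (k + 3) x + fhF h (k + 1) x := by
  simp only [fhF, Nat.add_eq_zero_iff, OfNat.ofNat_ne_zero, one_ne_zero, and_false, if_false]
  push_cast
  have e1 : x + 1 + ((k : ℤ) + 2) = x + (k + 3) := by ring
  have e2 : x + 1 - ((k : ℤ) + 2) = x - (k + 1) := by ring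
  have e3 : x - 1 + ((k : ℤ) + 2) = x + (k + 1) := by ring
  have e4 : x - 1 - ((k : ℤ) + 2) = x - (k + 3) := by ring
  rw [e1, e2, e3, e4]; ring

theorem fh_sum {R : Type*} [CommRing R] (h : ℤ → R) (x : ℤ) (r N : ℕ) :
    ∑ k ∈ Finset.range (N + 2), fhC R r k * (fhF h k (x + 1) + fhF h k (x - 1)) =
      ∑ k ∈ Finset.range (N + 3), fhC R (r + 1) k * fhF h k x
        - fhC R r (N + 2) * fhF h (N + 1) x - fhC R r (N + 3) * fhF h (N + 2) x := by
  induction N with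
  | zero =>
    have e1 : x + 1 + 1 = x + 2 := by ring
    have e4 : x - 1 - 1 = x - 2 := by ring
    simp [Finset.sum_range_succ, fhC, fhF, e1, e4]
    ring
  | succ N ih =>
    rw [Finset.sum_range_succ, ih, Finset.sum_range_succ _ (N + 3), fhF_step, fhC]
    ring

theorem fh_iter {R : Type*} [CommRing R] (h : ℤ → R) (r : ℕ) : ∀ x : ℤ,
    iterh h r x = ∑ k ∈ Finset.range (r + 2), fhC R r k * fhF h k x := by
  induction r with
  | zero => intro x; simp [Finset.sum_range_succ, iterh, fhC, fhF]
  | succ r ih =>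
    intro x
    rw [iterh, ih, ih, ← Finset.sum_add_distrib]
    simp only [← mul_add]
    rw [fh_sum, fhC_zero R r (r + 2) (by omega), fhC_zero R r (r + 3) (by omega)]
    simp

/-- The Jacobi–Trudy determinant `det(h^{(j-1)}_{m_i})` equals the Fulton–Harris form:
the determinant of the matrix whose first column is `h_{m_i}` and whose `j`-th column,
for `2 ≤ j ≤ l`, is `h_{m_i + j - 1} + h_{m_i + 1 - j}`. -/
theorem iterh_det_fulton_harris (R : Type*) [CommRing R] (h : ℤ → R) (l : ℕ) (hl : 1 ≤ l)
    (m : Fin l → ℤ) :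
    Matrix.det (Matrix.of fun i j : Fin l => iterh h (j : ℕ) (m i)) =
      Matrix.det (Matrix.of fun i j : Fin l =>
        if (j : ℕ) = 0 then h (m i)
        else h (m i + (j : ℕ)) + h (m i - (j : ℕ))) := by
  have key : (Matrix.of fun i j : Fin l => iterh h (j : ℕ) (m i)) =
      (Matrix.of fun i j : Fin l => fhF h (j : ℕ) (m i)) *
        (Matrix.of fun k j : Fin l => fhC R (j : ℕ) (k : ℕ)) := by
    ext i j
    simp only [Matrix.mul_apply, Matrix.of_apply]
    rw [Fin.sum_univ_eq_sum_range (fun k => fhF h k (m i) * fhC R (j : ℕ) k) l, fh_iter,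
      Finset.sum_range_succ, fhC_zero R j (j + 1) (by omega), zero_mul, add_zero]
    simp only [mul_comm (fhC R _ _)]
    apply Finset.sum_subset
    · intro k hk
      have := j.2
      simp only [Finset.mem_range] at *
      omega
    · intro k _ hk
      simp only [Finset.mem_range] at hk
      rw [fhC_zero R j k (by omega), mul_zero]
  have hdet : (Matrix.of fun k j : Fin l => fhC R (j : ℕ) (k : ℕ)).det = 1 := by
    rw [Matrix.det_of_isUpperTriangular]
    · simp [fhC_diag]
    · intro k j hkj
      exact fhC_zero R j k hkj
  rw [key, Matrix.det_mul, hdet, mul_one]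
  rfl
end
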